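/- arXiv:2006.03640 — 3 statements merged into one kernel-verified Lean document; each statement's English description precedes it below -/
import Mathlib

section
/- For k = 2 and k = 3, the torsion subgroup of the cokernel of the linear map N_k : ℤ^k → ℤ^{C(k,2)} is cyclic of order 3; for every k ≥ 4, the cokernel of N_k : ℤ^k → ℤ^{C(k,2)} is torsion-free (equivalently, the last nonzero invariant factor of N_k equals 1). -/
/-!
The matrix `N_k = e^{(2)}(1, k, D_{k+1})` of the second differential of the complex
`Hom(P_*(1,k), D_{k+1})` computing `Ext^*(Λ^{k+1}, D_{k+1})` over the integral Schur
algebra (Stergiopoulou, proof of Lemma 2.4).  For `k ≥ 2`, `N_k` has `C(k,2)` rows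
and `k` columns; it is defined recursively by `N_2 = (3 3)` and, for `k ≥ 3`,
`N_k = [[v_k, D_k], [0, −N_{k−1}]]`, where `v_k = (3, −2, 2, −2, …, (−1)^{k−2}·2)ᵀ`
is a column vector of size `k − 1` and `D_k = diag(3, 2, …, 2)` of size
`(k−1) × (k−1)`.  Below, `Nmat j` is `N_{j+2}` (so `k = j + 2` ranges over `k ≥ 2`).
-/

/-- The column vector `(3, −2, 2, −2, …)ᵀ`: first entry `3`, then alternating `∓2`. -/
def vcol (m : ℕ) : Matrix (Fin m) (Fin 1) ℤ :=
  Matrix.of fun i _ => if (i : ℕ) = 0 then 3 else (-1) ^ (i : ℕ) * 2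

/-- The diagonal matrix `diag(3, 2, 2, …, 2)`. -/
def dmat (m : ℕ) : Matrix (Fin m) (Fin m) ℤ :=
  Matrix.diagonal fun i => if (i : ℕ) = 0 then 3 else 2

private lemma choose2_step (m : ℕ) : m + 2 + ((m + 2).choose 2) = (m + 3).choose 2 := by
  have h := Nat.choose_succ_succ (m + 2) 1
  simp only [Nat.succ_eq_add_one, Nat.choose_one_right, show (1 : ℕ) + 1 = 2 from rfl,
    show m + 2 + 1 = m + 3 from rfl] at h
  omega

/-- `Nmat j` is the matrix `N_k` (with `k = j + 2`): `N_2 = (3 3)` and, for `k ≥ 3`,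
`N_k` is the block matrix `[[v_k, D_k], [0, −N_{k−1}]]`. -/
def Nmat : (j : ℕ) → Matrix (Fin ((j + 2).choose 2)) (Fin (j + 2)) ℤ
  | 0 => Matrix.of fun _ _ => 3
  | j + 1 =>
    Matrix.reindex
      (finSumFinEquiv.trans (finCongr (choose2_step j)))
      (finSumFinEquiv.trans (finCongr (by omega)))
      (Matrix.fromBlocks (vcol (j + 2)) (dmat (j + 2)) 0 (-(Nmat j)))

lemma torsion_core {m k : ℕ} (A : Matrix (Fin m) (Fin k) ℤ) (r0 : Fin m) (g : Fin m → ℤ)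
    (hg : g r0 = 1) (hg3 : (3 : ℤ) • g ∈ LinearMap.range A.mulVecLin)
    (hr : ∀ x, (3 : ℤ) ∣ (A.mulVec x) r0)
    (hinj : ∀ (y : Fin m → ℤ) (n : ℤ), n ≠ 0 → n • y ∈ LinearMap.range A.mulVecLin →
      3 ∣ y r0 → y ∈ LinearMap.range A.mulVecLin) :
    Nonempty ((Submodule.torsion ℤ ((Fin m → ℤ) ⧸ LinearMap.range A.mulVecLin)) ≃+ ZMod 3) := by
  let f : (Fin m → ℤ) →ₗ[ℤ] ZMod 3 :=
    ((Int.castAddHom (ZMod 3)).toIntLinearMap).comp (LinearMap.proj r0)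
  have hf : ∀ y, f y = ((y r0 : ℤ) : ZMod 3) := fun y => rfl
  have hle : LinearMap.range A.mulVecLin ≤ LinearMap.ker f := by
    rintro _ ⟨x, rfl⟩
    rw [LinearMap.mem_ker, hf, ZMod.intCast_zmod_eq_zero_iff_dvd]
    exact hr x
  let F := (Submodule.liftQ _ f hle).comp
    (Submodule.torsion ℤ ((Fin m → ℤ) ⧸ LinearMap.range A.mulVecLin)).subtype
  refine ⟨AddEquiv.ofBijective F ⟨?_, ?_⟩⟩
  · rw [injective_iff_map_eq_zero]
    rintro ⟨q, hq⟩ h0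
    obtain ⟨y, rfl⟩ := Submodule.mkQ_surjective _ q
    have h1 : ((y r0 : ℤ) : ZMod 3) = 0 := h0
    rw [ZMod.intCast_zmod_eq_zero_iff_dvd] at h1
    rw [Submodule.mem_torsion_iff] at hq
    obtain ⟨a, ha⟩ := hq
    have h2 : ((a : ℤ) • y) ∈ LinearMap.range A.mulVecLin := by
      rw [← Submodule.Quotient.mk_eq_zero]
      exact ha
    have h3 := hinj y a (nonZeroDivisors.coe_ne_zero a) h2 h1
    apply Subtype.ext
    exact (Submodule.Quotient.mk_eq_zero _).2 h3
  · intro c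
    have ht : Submodule.Quotient.mk g ∈
        Submodule.torsion ℤ ((Fin m → ℤ) ⧸ LinearMap.range A.mulVecLin) := by
      rw [Submodule.mem_torsion_iff]
      refine ⟨⟨3, by simp⟩, ?_⟩
      exact (Submodule.Quotient.mk_eq_zero _).2 hg3
    refine ⟨(c.val : ℤ) • ⟨_, ht⟩, ?_⟩
    have h1 : F ⟨_, ht⟩ = 1 := by
      change ((g r0 : ℤ) : ZMod 3) = 1
      rw [hg]; simp
    rw [map_smul, h1]
    simp

lemma Nmat_succ_dvd (j : ℕ) (n : ℤ) (x : ℕ → ℤ) :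
    (∀ r, n ∣ ((Nmat (j+1)).mulVec (fun i => x i)) r) ↔
      (∀ i : ℕ, i < j + 2 → n ∣ (if i = 0 then 3 else (-1) ^ i * 2) * x 0
        + (if i = 0 then 3 else 2) * x (i+1)) ∧
      (∀ r, n ∣ ((Nmat j).mulVec (fun i => x (i+1))) r) := by
  have e1 : ∀ r : Fin (j+2) ⊕ Fin ((j+2).choose 2),
      ((Nmat (j+1)).mulVec (fun i => x i))
        ((finSumFinEquiv.trans (finCongr (choose2_step j))) r) =
      (Matrix.fromBlocks (vcol (j + 2)) (dmat (j + 2)) 0 (-(Nmat j))).mulVec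
        (Sum.elim (fun _ : Fin 1 => x 0) (fun i : Fin (j+2) => x (i+1))) r := by
    intro r
    simp only [Matrix.mulVec, dotProduct, Nmat]
    rw [← Equiv.sum_comp (finSumFinEquiv.trans (finCongr (show 1 + (j+2) = j + 1 + 2 by omega)))]
    apply Finset.sum_congr rfl
    rintro (i | i) _
    · simp
    · simp only [Matrix.reindex_apply, Matrix.submatrix_apply, Equiv.symm_apply_apply, Sum.elim_inr]
      congr 2
      simp [add_comm]
  rw [← (finSumFinEquiv.trans (finCongr (choose2_step j))).forall_congr_right]
  simp only [e1, Sum.forall]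
  apply and_congr
  · rw [Fin.forall_iff]
    refine forall_congr' fun i => forall_congr' fun hi => ?_
    simp [Matrix.fromBlocks_mulVec, vcol, dmat, Matrix.mulVec_diagonal, Matrix.mulVec, dotProduct,
      Matrix.diagonal_apply]
  · refine forall_congr' fun i => ?_
    simp [Matrix.fromBlocks_mulVec, Matrix.neg_mulVec, Function.comp_def]

lemma Nmat_dvd (j : ℕ) (n : ℤ) (x : ℕ → ℤ) :
    (∀ r, n ∣ ((Nmat j).mulVec (fun i => x i)) r) ↔
      (∀ i, i < j + 1 → n ∣ 3 * ((-1)^i * x i - (-1)^(i+1) * x (i+1))) ∧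
      (∀ i l, i + 2 ≤ l → l < j + 2 → n ∣ 2 * ((-1)^i * x i - (-1)^l * x l)) := by
  have sg : ∀ (i : ℕ) (a b : ℤ), a = (-1)^i * b → (n ∣ a ↔ n ∣ b) := by
    intro i a b h
    rcases neg_one_pow_eq_or ℤ i with h' | h' <;> rw [h, h'] <;> simp
  induction j generalizing x with
  | zero =>
    constructor
    · intro h
      have h0 := h ⟨0, by decide⟩
      simp [Nmat, Matrix.mulVec, dotProduct, Fin.sum_univ_two] at h0
      refine ⟨fun i hi => ?_, fun i l h1 h2 => by omega⟩
      obtain rfl : i = 0 := by omega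
      convert h0 using 1; ring
    · rintro ⟨h, -⟩ r
      have h0 := h 0 (by omega)
      simp [Nmat, Matrix.mulVec, dotProduct, Fin.sum_univ_two]
      convert h0 using 1; ring
  | succ j ih =>
    have ih' := ih (fun i => x (i+1))
    refine (Nmat_succ_dvd j n x).trans ((and_congr_right' ih').trans ?_)
    constructor
    · rintro ⟨h1, h2, h3⟩
      constructor
      · rintro (_ | i) hi
        · convert h1 0 (by omega) using 1; simp; ring
        · rw [sg 1 _ _ (show _ = (-1)^1 * (3 * ((-1)^i * x (i+1) - (-1)^(i+1) * x (i+1+1))) by ring)]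
          exact h2 i (by omega)
      · rintro (_ | i) (_ | l) hil hl
        · omega
        · have := h1 l (by omega)
          rw [if_neg (by omega), if_neg (by omega)] at this
          refine (sg l _ _ ?_).1 this
          rcases neg_one_pow_eq_or ℤ l with h' | h' <;> rw [pow_succ, h'] <;> ring
        · omega
        · rw [sg 1 _ _ (show _ = (-1)^1 * (2 * ((-1)^i * x (i+1) - (-1)^l * x (l+1))) by ring)]
          exact h3 i l (by omega) (by omega)
    · rintro ⟨h1, h2⟩
      refine ⟨?_, ?_, ?_⟩
      · rintro (_ | i) hi
        · convert h1 0 (by omega) using 1; simp; ring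
        · rw [if_neg (by omega), if_neg (by omega)]
          refine (sg (i+1) _ _ ?_).2 (h2 0 (i+1+1) (by omega) (by omega))
          rcases neg_one_pow_eq_or ℤ (i+1) with h' | h' <;> rw [pow_succ _ (i+1), h'] <;> ring
      · intro i hi
        rw [sg 1 _ _ (show _ = (-1)^1 * (3 * ((-1)^(i+1) * x (i+1) - (-1)^(i+1+1) * x (i+1+1))) by ring)]
        exact h1 (i+1) (by omega)
      · intro i l hil hl
        rw [sg 1 _ _ (show _ = (-1)^1 * (2 * ((-1)^(i+1) * x (i+1) - (-1)^(l+1) * x (l+1))) by ring)]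
        exact h2 (i+1) (l+1) (by omega) (by omega)

/-- connectivity of the complement of the path on `m ≥ 4` vertices -/
lemma dvd_step (m : ℕ) (hm : 4 ≤ m) (n : ℤ) (z : ℕ → ℤ)
    (h : ∀ i l, i + 2 ≤ l → l < m → n ∣ 2 * (z i - z l)) (i : ℕ) (hi : i + 1 < m) :
    n ∣ 2 * (z i - z (i+1)) := by
  by_cases h3 : i + 3 < m
  · have := Int.dvd_sub (h i (i+3) (by omega) h3) (h (i+1) (i+3) (by omega) h3)
    convert this using 1; ring
  · by_cases h1 : 2 ≤ i
    · have := Int.dvd_sub (h 0 (i+1) (by omega) hi) (h 0 i (by omega) (by omega))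
      convert this using 1; ring
    · obtain rfl : i = 1 := by omega
      have a := h 1 3 (by omega) (by omega)
      have b := h 0 3 (by omega) (by omega)
      have c := h 0 2 (by omega) (by omega)
      have := Int.dvd_add (Int.dvd_sub a b) c
      convert this using 1; ring

lemma Nmat_sat (j : ℕ) (hj : 2 ≤ j) (n : ℤ) (hn : n ≠ 0) (y : Fin ((j+2).choose 2) → ℤ)
    (hy : n • y ∈ LinearMap.range (Nmat j).mulVecLin) :
    y ∈ LinearMap.range (Nmat j).mulVecLin := by
  obtain ⟨x0, hx⟩ := hy
  let x : ℕ → ℤ := fun i => if h : i < j + 2 then x0 ⟨i, h⟩ else 0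
  have hx0 : x0 = fun i : Fin (j+2) => x i := by
    funext i; simp [x]
  rw [Matrix.mulVecLin_apply] at hx
  have hd : ∀ r, n ∣ ((Nmat j).mulVec (fun i => x i)) r := by
    intro r
    rw [← hx0, hx]; simp
  obtain ⟨h3, h2⟩ := (Nmat_dvd j n x).1 hd
  have hs : ∀ i, i + 1 < j + 2 → n ∣ (-1)^i * x i - (-1)^(i+1) * x (i+1) := by
    intro i hi
    have a := dvd_step (j+2) (by omega) n (fun i => (-1)^i * x i) h2 i hi
    have b := h3 i (by omega)
    have := Int.dvd_sub b a
    convert this using 1; ring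
  have hz : ∀ i, i < j + 2 → n ∣ (-1)^i * x i - x 0 := by
    intro i
    induction i with
    | zero => intro _; simp
    | succ i ih =>
      intro hi
      have := Int.dvd_sub (ih (by omega)) (hs i hi)
      convert this using 1; ring
  have hker : (Nmat j).mulVec (fun i : Fin (j+2) => (-1)^(i:ℕ) * x 0) = 0 := by
    funext r
    rw [Pi.zero_apply, ← zero_dvd_iff]
    revert r
    rw [Nmat_dvd j 0 (fun i => (-1)^i * x 0)]
    have : ∀ i : ℕ, (-1 : ℤ)^i * ((-1)^i * x 0) = x 0 := by
      intro i; rw [← mul_assoc, ← mul_pow]; simp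
    simp [this]
  have hw : ∀ i : Fin (j+2), n ∣ x i - (-1)^(i:ℕ) * x 0 := by
    intro i
    have := hz i i.2
    rcases neg_one_pow_eq_or ℤ (i:ℕ) with h' | h' <;> rw [h'] at this ⊢
    · simpa using this
    · refine Int.dvd_neg.1 ?_; convert this using 1; ring
  choose w hw using hw
  refine ⟨w, ?_⟩
  rw [Matrix.mulVecLin_apply]
  apply smul_right_injective _ hn
  change n • (Nmat j).mulVec w = n • y
  rw [← Matrix.mulVec_smul, ← hx, hx0]
  have : n • w = (fun i : Fin (j+2) => x i) - fun i : Fin (j+2) => (-1)^(i:ℕ) * x 0 := by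
    funext i
    simp [hw i]
  rw [this, Matrix.mulVec_sub, hker, sub_zero]

lemma Nmat_one_eq : (Nmat 1 : Matrix (Fin 3) (Fin 3) ℤ) = !![3,3,0;-2,0,2;0,-3,-3] := by
  ext i l
  fin_cases i <;> fin_cases l <;> decide +kernel

lemma Nmat_zero_eq : (Nmat 0 : Matrix (Fin 1) (Fin 2) ℤ) = !![3,3] := by
  ext i l
  fin_cases i <;> fin_cases l <;> decide +kernel

/-- For `k = 2, 3`, the torsion subgroup of the cokernel of
`N_k : ℤ^k → ℤ^{C(k,2)}` is cyclic of order `3`; for every `k ≥ 4` the cokernel is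
torsion-free.  (Here `Nmat j = N_{j+2}`, so `k = 2, 3` are `j = 0, 1` and `k ≥ 4`
is `j ≥ 2`.) -/
theorem torsion_coker_Nmat :
    Nonempty ((Submodule.torsion ℤ ((Fin (((0 : ℕ) + 2).choose 2) → ℤ) ⧸
        LinearMap.range (Nmat 0).mulVecLin)) ≃+ ZMod 3) ∧
    Nonempty ((Submodule.torsion ℤ ((Fin (((1 : ℕ) + 2).choose 2) → ℤ) ⧸
        LinearMap.range (Nmat 1).mulVecLin)) ≃+ ZMod 3) ∧
    (∀ j : ℕ, 2 ≤ j →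
      Submodule.torsion ℤ ((Fin ((j + 2).choose 2) → ℤ) ⧸
        LinearMap.range (Nmat j).mulVecLin) = ⊥) := by
  refine ⟨?_, ?_, ?_⟩
  · have key : Nonempty ((Submodule.torsion ℤ ((Fin 1 → ℤ) ⧸
        LinearMap.range (Matrix.mulVecLin (m := Fin 1) (n := Fin 2) (Nmat 0)))) ≃+ ZMod 3) := by
      rw [Nmat_zero_eq]
      have hm : ∀ (x : Fin 2 → ℤ),
          (!![3,3] : Matrix (Fin 1) (Fin 2) ℤ).mulVec x = ![3 * (x 0 + x 1)] := by
        intro x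
        funext r
        fin_cases r
        simp [Matrix.mulVec, dotProduct, Fin.sum_univ_two]
        ring
      refine torsion_core _ 0 ![1] rfl ⟨![1, 0], ?_⟩ ?_ ?_
      · rw [Matrix.mulVecLin_apply, hm]
        simp
      · intro x; rw [hm]; exact ⟨x 0 + x 1, by simp⟩
      · rintro y n - - ⟨c, hc⟩
        refine ⟨![c, 0], ?_⟩
        rw [Matrix.mulVecLin_apply, hm]
        funext r
        fin_cases r
        simp [hc]
    exact key
  · have key : Nonempty ((Submodule.torsion ℤ ((Fin 3 → ℤ) ⧸
        LinearMap.range (Matrix.mulVecLin (m := Fin 3) (n := Fin 3) (Nmat 1)))) ≃+ ZMod 3) := by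
      rw [Nmat_one_eq]
      have hm : ∀ (x : Fin 3 → ℤ),
          (!![3,3,0;-2,0,2;0,-3,-3] : Matrix (Fin 3) (Fin 3) ℤ).mulVec x =
          ![3 * x 0 + 3 * x 1, -2 * x 0 + 2 * x 2, -3 * x 1 - 3 * x 2] := by
        intro x
        funext r
        fin_cases r <;> simp [Matrix.mulVec, dotProduct, Fin.sum_univ_three]
        ring
      refine torsion_core _ 0 ![1, 0, -1] rfl ⟨![0, 1, 0], ?_⟩ ?_ ?_
      · rw [Matrix.mulVecLin_apply, hm]
        simp
      · intro x; rw [hm]; exact ⟨x 0 + x 1, by simp; ring⟩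
      · rintro y n hn ⟨x, hx⟩ ⟨c, hc⟩
        rw [Matrix.mulVecLin_apply, hm] at hx
        have e0 := congrFun hx 0
        have e1 := congrFun hx 1
        have e2 := congrFun hx 2
        simp at e0 e1 e2
        have rel : 2 * y 0 + 3 * y 1 + 2 * y 2 = 0 := by
          apply mul_left_cancel₀ hn
          linear_combination (-2) * e0 - 3 * e1 - 2 * e2
        obtain ⟨t, ht⟩ : ∃ t, y 1 = 2 * t := ⟨y 1 / 2, by omega⟩
        refine ⟨![0, c, t], ?_⟩
        rw [Matrix.mulVecLin_apply, hm]
        funext r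
        fin_cases r
        · simp [hc]
        · simp [ht]
        · simp; omega
    exact key
  · intro j hj
    rw [eq_bot_iff]
    intro q hq
    obtain ⟨y, rfl⟩ := Submodule.mkQ_surjective _ q
    rw [Submodule.mem_torsion_iff] at hq
    obtain ⟨a, ha⟩ := hq
    have h2 : ((a : ℤ) • y) ∈ LinearMap.range (Nmat j).mulVecLin := by
      rw [← Submodule.Quotient.mk_eq_zero]
      exact ha
    have h3 := Nmat_sat j hj a (nonZeroDivisors.coe_ne_zero a) y h2
    rw [Submodule.mem_bot]
    exact (Submodule.Quotient.mk_eq_zero _).2 h3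
end

section
/- For every k ≥ 2, N_k · w_k = 0, where w_k = (2, −2, 2, …, (−1)^{k−1}·2)ᵀ ∈ ℤ^k; in particular the rank of N_k is at most k − 1. Moreover, for every k ≥ 4: the (k−1) × (k−1) minor of N_k on rows 2, 3, …, k−1, k+1 and columns 2, 3, …, k equals ±2^{k−1}, and the (k−1) × (k−1) minor of N_k on rows 1, 1+(k−1), 1+(k−1)+(k−2), …, C(k,2) and columns 1, 2, …, k−1 equals ±3^{k−1}; in particular N_k has two relatively prime minors of size k − 1. -/
lemma Nmat_top_zero (j : ℕ) (r : Fin ((j + 1 + 2).choose 2)) (c : Fin (j + 1 + 2))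
    (i : Fin (j + 2)) (hr : (r : ℕ) = i) (hc : (c : ℕ) = 0) :
    Nmat (j + 1) r c = if (i : ℕ) = 0 then 3 else (-1) ^ (i : ℕ) * 2 := by
  have h1 : r = (finSumFinEquiv.trans (finCongr (choose2_step j))) (Sum.inl i) := by
    apply Fin.ext; simp [hr]
  have h2 : c = (finSumFinEquiv.trans (finCongr (show 1 + (j + 2) = j + 1 + 2 by omega)))
      (Sum.inl 0) := by
    apply Fin.ext; simp [hc]
  rw [h1, h2, Nmat, Matrix.reindex_apply, Matrix.submatrix_apply, Equiv.symm_apply_apply,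
    Equiv.symm_apply_apply, Matrix.fromBlocks_apply₁₁]
  rfl

lemma Nmat_top_succ (j : ℕ) (r : Fin ((j + 1 + 2).choose 2)) (c : Fin (j + 1 + 2))
    (i d : Fin (j + 2)) (hr : (r : ℕ) = i) (hc : (c : ℕ) = d + 1) :
    Nmat (j + 1) r c = if i = d then (if (i : ℕ) = 0 then 3 else 2) else 0 := by
  have h1 : r = (finSumFinEquiv.trans (finCongr (choose2_step j))) (Sum.inl i) := by
    apply Fin.ext; simp [hr]
  have h2 : c = (finSumFinEquiv.trans (finCongr (show 1 + (j + 2) = j + 1 + 2 by omega)))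
      (Sum.inr d) := by
    apply Fin.ext; simp [hc, Nat.add_comm]
  rw [h1, h2, Nmat, Matrix.reindex_apply, Matrix.submatrix_apply, Equiv.symm_apply_apply,
    Equiv.symm_apply_apply, Matrix.fromBlocks_apply₁₂]
  rw [dmat, Matrix.diagonal_apply]

lemma Nmat_bot_zero (j : ℕ) (r : Fin ((j + 1 + 2).choose 2)) (c : Fin (j + 1 + 2))
    (i : Fin ((j + 2).choose 2)) (hr : (r : ℕ) = j + 2 + i) (hc : (c : ℕ) = 0) :
    Nmat (j + 1) r c = 0 := by
  have h1 : r = (finSumFinEquiv.trans (finCongr (choose2_step j))) (Sum.inr i) := by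
    apply Fin.ext; simp [hr]
  have h2 : c = (finSumFinEquiv.trans (finCongr (show 1 + (j + 2) = j + 1 + 2 by omega)))
      (Sum.inl 0) := by
    apply Fin.ext; simp [hc]
  rw [h1, h2, Nmat, Matrix.reindex_apply, Matrix.submatrix_apply, Equiv.symm_apply_apply,
    Equiv.symm_apply_apply, Matrix.fromBlocks_apply₂₁]
  rfl

lemma Nmat_bot_succ (j : ℕ) (r : Fin ((j + 1 + 2).choose 2)) (c : Fin (j + 1 + 2))
    (i : Fin ((j + 2).choose 2)) (d : Fin (j + 2))
    (hr : (r : ℕ) = j + 2 + i) (hc : (c : ℕ) = d + 1) :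
    Nmat (j + 1) r c = - Nmat j i d := by
  have h1 : r = (finSumFinEquiv.trans (finCongr (choose2_step j))) (Sum.inr i) := by
    apply Fin.ext; simp [hr]
  have h2 : c = (finSumFinEquiv.trans (finCongr (show 1 + (j + 2) = j + 1 + 2 by omega)))
      (Sum.inr d) := by
    apply Fin.ext; simp [hc, Nat.add_comm]
  rw [h1, h2, Nmat, Matrix.reindex_apply, Matrix.submatrix_apply, Equiv.symm_apply_apply,
    Equiv.symm_apply_apply, Matrix.fromBlocks_apply₂₂]
  rfl

lemma Nmat_kernel : ∀ j : ℕ, (Nmat j).mulVec (fun i => (-1 : ℤ) ^ (i : ℕ) * 2) = 0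
  | 0 => by
    funext r
    simp [Matrix.mulVec, dotProduct, Nmat, Fin.sum_univ_two]
  | j + 1 => by
    funext r
    have ih := Nmat_kernel j
    simp only [Matrix.mulVec, dotProduct, Pi.zero_apply]
    rw [Fin.sum_univ_succ]
    by_cases h : (r : ℕ) < j + 2
    · rw [Nmat_top_zero j r 0 ⟨r, h⟩ rfl rfl]
      rw [Finset.sum_congr rfl (fun d _ => by
        rw [Nmat_top_succ j r (Fin.succ d) ⟨r, h⟩ d rfl (by simp)])]
      simp only [ite_mul, zero_mul, Finset.sum_ite_eq, Finset.mem_univ, if_true, Fin.val_succ,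
        Fin.val_zero]
      by_cases h0 : (r : ℕ) = 0
      · simp [h0]
      · simp only [h0, if_false]; ring
    · have hb : (r : ℕ) - (j + 2) < (j + 2).choose 2 := by
        have := r.isLt
        have h2 := choose2_step j
        have h3 : (j + 1 + 2).choose 2 = (j + 3).choose 2 := rfl
        omega
      have hr : (r : ℕ) = j + 2 + ((⟨(r : ℕ) - (j + 2), hb⟩ : Fin _) : ℕ) := by
        simp only; omega
      rw [Nmat_bot_zero j r 0 _ hr rfl]
      rw [Finset.sum_congr rfl (fun d _ => by
        rw [Nmat_bot_succ j r (Fin.succ d) _ d hr (by simp)])]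
      have := congrFun ih ⟨(r : ℕ) - (j + 2), hb⟩
      simp only [Matrix.mulVec, dotProduct, Pi.zero_apply] at this
      rw [zero_mul, zero_add, ← this]
      apply Finset.sum_congr rfl
      intro d _
      rw [Fin.val_succ, pow_succ]
      ring

lemma Nmat_rank (j : ℕ) : (Nmat j).rank ≤ j + 1 := by
  have h := Submodule.finrank_quotient_add_finrank (LinearMap.ker (Nmat j).mulVecLin)
  rw [Module.finrank_fin_fun, (Nmat j).mulVecLin.quotKerEquivRange.finrank_eq] at h
  have hpos : 0 < Module.finrank ℤ (LinearMap.ker (Nmat j).mulVecLin) := by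
    rw [Module.finrank_pos_iff]
    refine ⟨⟨⟨fun i => (-1 : ℤ) ^ (i : ℕ) * 2, ?_⟩, 0, ?_⟩⟩
    · rw [LinearMap.mem_ker, Matrix.mulVecLin_apply]
      exact Nmat_kernel j
    · intro e
      have := congrFun (congrArg Subtype.val e) 0
      simp at this
  rw [Matrix.rank]
  omega

lemma sum_shift (j i : ℕ) : ∑ t ∈ Finset.range (i + 1), (j + 1 + 1 - t) =
    j + 2 + ∑ t ∈ Finset.range i, (j + 1 - t) := by
  rw [Finset.sum_range_succ']
  simp only [Nat.add_sub_add_right]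
  omega

lemma sum_lt : ∀ j i : ℕ, i < j + 1 →
    ∑ t ∈ Finset.range i, (j + 1 - t) < (j + 2).choose 2
  | j, 0, _ => by
    simpa using Nat.choose_pos (show 2 ≤ j + 2 by omega)
  | 0, i + 1, h => by omega
  | j + 1, i + 1, h => by
    have := sum_lt j i (by omega)
    have h2 := choose2_step j
    have h3 : (j + 1 + 2).choose 2 = (j + 3).choose 2 := rfl
    rw [sum_shift]
    omega

lemma Nmat_three : ∀ (j i : ℕ) (_ : i < j + 1) (r : Fin ((j + 2).choose 2)) (c : Fin (j + 2))
    (_ : (r : ℕ) = ∑ t ∈ Finset.range i, (j + 1 - t)),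
    Nmat j r c = if (c : ℕ) = i ∨ (c : ℕ) = i + 1 then (-1) ^ i * 3 else 0
  | 0, i, hi, r, c, hr => by
    have : i = 0 := by omega
    subst this
    have : (c : ℕ) = 0 ∨ (c : ℕ) = 0 + 1 := by omega
    rw [if_pos this]
    simp [Nmat]
  | j + 1, 0, hi, r, c, hr => by
    have hr0 : (r : ℕ) = 0 := by simpa using hr
    rcases Nat.eq_zero_or_pos (c : ℕ) with hc | hc
    · rw [Nmat_top_zero j r c 0 (by simpa using hr0) hc]
      simp [hc]
    · rw [Nmat_top_succ j r c 0 ⟨(c : ℕ) - 1, by omega⟩ (by simpa using hr0)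
        (by simp only; omega)]
      by_cases h1 : (c : ℕ) = 1
      · simp [h1]
      · rw [if_neg, if_neg (by omega)]
        intro e
        have := congrArg Fin.val e
        simp at this
        omega
  | j + 1, i + 1, hi, r, c, hr => by
    have hs := sum_lt j i (by omega)
    rw [sum_shift] at hr
    rcases Nat.eq_zero_or_pos (c : ℕ) with hc | hc
    · rw [Nmat_bot_zero j r c ⟨_, hs⟩ hr hc, if_neg (by omega)]
    · rw [Nmat_bot_succ j r c ⟨_, hs⟩ ⟨(c : ℕ) - 1, by omega⟩ hr (by simp only; omega)]
      rw [Nmat_three j i (by omega) ⟨_, hs⟩ _ rfl]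
      by_cases h1 : (c : ℕ) = i + 1 ∨ (c : ℕ) = i + 1 + 1
      · rw [if_pos (by simp only; omega), if_pos h1, pow_succ]
        ring
      · rw [if_neg (by simp only; omega), if_neg h1, neg_zero]

lemma minor_three (j : ℕ) :
    (∃ rowsel : Fin (j + 1) → Fin ((j + 2).choose 2),
        ∃ colsel : Fin (j + 1) → Fin (j + 2),
        (∀ i, (rowsel i : ℕ) = ∑ t ∈ Finset.range (i : ℕ), (j + 1 - t)) ∧
        (∀ i, (colsel i : ℕ) = (i : ℕ)) ∧
        (((Nmat j).submatrix rowsel colsel).det = 3 ^ (j + 1) ∨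
          ((Nmat j).submatrix rowsel colsel).det = -(3 ^ (j + 1)))) := by
  refine ⟨fun i => ⟨_, sum_lt j i i.isLt⟩, fun i => ⟨i, by omega⟩, fun i => rfl, fun i => rfl, ?_⟩
  rw [Matrix.det_of_upperTriangular]
  · simp only [Matrix.submatrix_apply]
    rw [Finset.prod_congr rfl (fun (i : Fin (j + 1)) _ => by
      rw [Nmat_three j i i.isLt _ _ rfl, if_pos (Or.inl rfl)])]
    rw [Finset.prod_mul_distrib, Finset.prod_const, Finset.card_univ, Fintype.card_fin,
      Finset.prod_pow_eq_pow_sum]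
    rcases neg_one_pow_eq_or ℤ (∑ i : Fin (j + 1), (i : ℕ)) with h | h <;> rw [h]
    · left; ring
    · right; ring
  · intro a b hab
    have hab' : (b : ℕ) < a := hab
    rw [Matrix.submatrix_apply, Nmat_three j a a.isLt _ _ rfl, if_neg]
    simp only; omega

lemma two_rows_lt (j : ℕ) (hj : 2 ≤ j) (i : ℕ) :
    (if i < j then i + 1 else j + 2) < (j + 2).choose 2 := by
  obtain ⟨m, rfl⟩ : ∃ m, j = m + 2 := ⟨j - 2, by omega⟩
  have h1 := choose2_step (m + 1)
  have h2 := choose2_step m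
  have h3 : (m + 2 + 2).choose 2 = (m + 1 + 3).choose 2 := rfl
  have h4 : (m + 3).choose 2 = (m + 1 + 2).choose 2 := rfl
  split_ifs <;> omega

lemma minor_two (j : ℕ) (hj : 2 ≤ j) :
    (∃ rowsel : Fin (j + 1) → Fin ((j + 2).choose 2),
        ∃ colsel : Fin (j + 1) → Fin (j + 2),
        (∀ i, (rowsel i : ℕ) = if (i : ℕ) < j then (i : ℕ) + 1 else j + 2) ∧
        (∀ i, (colsel i : ℕ) = (i : ℕ) + 1) ∧
        (((Nmat j).submatrix rowsel colsel).det = 2 ^ (j + 1) ∨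
          ((Nmat j).submatrix rowsel colsel).det = -(2 ^ (j + 1)))) := by
  refine ⟨fun i => ⟨_, two_rows_lt j hj i⟩, fun i => ⟨i + 1, by omega⟩, fun i => rfl,
    fun i => rfl, ?_⟩
  set M := (Nmat j).submatrix (fun i : Fin (j + 1) => (⟨_, two_rows_lt j hj i⟩ : Fin _))
    (fun i : Fin (j + 1) => (⟨i + 1, by omega⟩ : Fin (j + 2))) with hM
  have hrot : ∀ c : Fin (j + 1), ((finRotate (j + 1) c : Fin (j + 1)) : ℕ) =
      if (c : ℕ) = j then 0 else (c : ℕ) + 1 := by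
    intro c
    rw [coe_finRotate]
    simp [Fin.ext_iff]
  have key : (M.submatrix id (finRotate (j + 1))).det = 2 ^ (j + 1) := by
    obtain ⟨m, rfl⟩ : ∃ m, j = m + 1 + 1 := ⟨j - 2, by omega⟩
    have htop : ∀ (i c : Fin (m + 1 + 1 + 1)), (i : ℕ) < m + 1 + 1 →
        M.submatrix id (finRotate (m + 1 + 1 + 1)) i c = if i = c then 2 else 0 := by
      intro i c hi
      rw [Matrix.submatrix_apply, hM, Matrix.submatrix_apply]
      rw [Nmat_top_succ (m + 1) _ _ ⟨i + 1, by omega⟩ (finRotate (m + 1 + 1 + 1) c)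
        (by simp [hi]) rfl]
      have := hrot c
      by_cases hic : i = c
      · subst hic
        rw [if_neg (by omega)] at this
        rw [if_pos, if_pos rfl]
        · simp
        · apply Fin.ext; simp only; omega
      · rw [if_neg, if_neg hic]
        intro e
        apply hic
        have e' := congrArg Fin.val e
        simp only at e'
        apply Fin.ext
        split_ifs at this <;> omega
    have hbot : M.submatrix id (finRotate (m + 1 + 1 + 1)) (Fin.last _) (Fin.last _) = 2 := by
      rw [Matrix.submatrix_apply, hM, Matrix.submatrix_apply]
      have hc : 1 < (m + 1 + 2).choose 2 := by
        have := choose2_step m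
        have h4 : (m + 3).choose 2 = (m + 1 + 2).choose 2 := rfl
        omega
      rw [Nmat_bot_succ (m + 1) _ _ ⟨1, hc⟩ 0 (by simp) (by simp)]
      rw [Nmat_top_zero m _ _ 1 (by simp) (by simp)]
      simp
    rw [Matrix.det_of_lowerTriangular]
    · rw [Finset.prod_congr rfl (g := fun _ => (2 : ℤ))]
      · simp
      · intro i _
        by_cases hi : (i : ℕ) < m + 1 + 1
        · rw [htop i i hi, if_pos rfl]
        · have : i = Fin.last _ := by apply Fin.ext; simp; omega
          rw [this, hbot]
    · intro a b hab
      have hab' : (a : ℕ) < b := hab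
      rw [htop a b (by omega), if_neg]
      intro e; subst e; omega
  rw [Matrix.det_permute'] at key
  rcases Int.units_eq_one_or (Equiv.Perm.sign (finRotate (j + 1))) with h | h <;> rw [h] at key
  · left; simpa using key
  · right
    have : -M.det = 2 ^ (j + 1) := by simpa using key
    omega

/-- For every `k ≥ 2`, `N_k · w_k = 0` where `w_k = (2, −2, 2, …, (−1)^{k−1}·2)ᵀ`,
so the rank of `N_k` is at most `k − 1`.  Moreover, for every `k ≥ 4`, the
`(k−1) × (k−1)` minor of `N_k` on rows `2, …, k−1, k+1` and columns `2, …, k`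
(1-indexed) equals `±2^{k−1}`, and the minor on rows
`1, 1+(k−1), 1+(k−1)+(k−2), …, C(k,2)` and columns `1, …, k−1` equals `±3^{k−1}`;
in particular `N_k` has two relatively prime minors of size `k − 1`.
(Here `Nmat j = N_{j+2}`; row/column selections are given 0-indexed, as functions
whose values are pinned by the accompanying equalities.) -/
theorem Nmat_kernel_vector_and_minors :
    (∀ j : ℕ, (Nmat j).mulVec (fun i => (-1 : ℤ) ^ (i : ℕ) * 2) = 0) ∧
    (∀ j : ℕ, (Nmat j).rank ≤ j + 1) ∧
    (∀ j : ℕ, 2 ≤ j →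
      (∃ rowsel : Fin (j + 1) → Fin ((j + 2).choose 2),
        ∃ colsel : Fin (j + 1) → Fin (j + 2),
        (∀ i, (rowsel i : ℕ) = if (i : ℕ) < j then (i : ℕ) + 1 else j + 2) ∧
        (∀ i, (colsel i : ℕ) = (i : ℕ) + 1) ∧
        (((Nmat j).submatrix rowsel colsel).det = 2 ^ (j + 1) ∨
          ((Nmat j).submatrix rowsel colsel).det = -(2 ^ (j + 1)))) ∧
      (∃ rowsel : Fin (j + 1) → Fin ((j + 2).choose 2),
        ∃ colsel : Fin (j + 1) → Fin (j + 2),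
        (∀ i, (rowsel i : ℕ) = ∑ t ∈ Finset.range (i : ℕ), (j + 1 - t)) ∧
        (∀ i, (colsel i : ℕ) = (i : ℕ)) ∧
        (((Nmat j).submatrix rowsel colsel).det = 3 ^ (j + 1) ∨
          ((Nmat j).submatrix rowsel colsel).det = -(3 ^ (j + 1))))) := by
  exact ⟨Nmat_kernel, Nmat_rank, fun j hj => ⟨minor_two j hj, minor_three j⟩⟩
end

section
/- For every positive integer r, gcd(r, C(r,2)) = gcd(r, C(r,2), C(r,3)) if and only if 3 does not divide r, where C(r,2) and C(r,3) are binomial coefficients. -/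
/-- For every positive integer `r`, `gcd(r, C(r,2)) = gcd(r, C(r,2), C(r,3))` if and
only if `3` does not divide `r`. -/
theorem gcd_choose_two_eq_gcd_choose_three_iff (r : ℕ) (hr : 0 < r) :
    Nat.gcd r (r.choose 2) = Nat.gcd (Nat.gcd r (r.choose 2)) (r.choose 3) ↔
      ¬ (3 ∣ r) := by
  have h2 : r.choose 2 * 2 = r * (r - 1) := by
    simpa using Nat.choose_succ_right_eq r 1
  have h3 : r.choose 3 * 3 = r.choose 2 * (r - 2) := Nat.choose_succ_right_eq r 2
  have p3 : Nat.Prime 3 := Nat.prime_three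
  rw [eq_comm, Nat.gcd_eq_left_iff_dvd]
  constructor
  · intro hg h
    obtain ⟨k, m, hm, hk⟩ := Nat.exists_eq_pow_mul_and_not_dvd hr.ne' 3 (by norm_num)
    have d1 : 3 ^ k ∣ r := ⟨m, hk⟩
    have d2 : 3 ^ k ∣ r.choose 2 := by
      have : Nat.Coprime (3 ^ k) 2 := Nat.Coprime.pow_left k (by norm_num)
      apply this.dvd_of_dvd_mul_right
      rw [h2]
      exact d1.mul_right _
    have d3 : 3 ^ k ∣ r.choose 3 := (Nat.dvd_gcd d1 d2).trans hg
    have d4 : 3 ^ (k + 1) ∣ r * ((r - 1) * (r - 2)) := by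
      have e : r * ((r - 1) * (r - 2)) = r.choose 3 * 3 * 2 := by
        rw [h3, ← mul_assoc, ← h2]; ring
      rw [e, pow_succ]
      exact (mul_dvd_mul_right d3 3).mul_right 2
    rw [hk, pow_succ, mul_assoc] at d4
    have d5 := Nat.dvd_of_mul_dvd_mul_left (by positivity) d4
    rw [← hk] at d5
    rcases p3.dvd_mul.1 d5 with h | h
    · exact hm h
    · rcases p3.dvd_mul.1 h with h | h <;> omega
  · intro h
    have c : Nat.Coprime (Nat.gcd r (r.choose 2)) 3 :=
      Nat.Coprime.coprime_dvd_left (Nat.gcd_dvd_left _ _)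
        ((p3.coprime_iff_not_dvd.2 h).symm)
    apply c.dvd_of_dvd_mul_right
    rw [h3]
    exact (Nat.gcd_dvd_right _ _).mul_right _
end
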